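/- Let k ≥ 2 and let t be a natural number such that every weighted graph with a terminal set of size k admits a mimicking network with at most t vertices. Then t(t−1)/2 ≥ 2^{k−1}−1; in particular t ≥ 2^{(k−1)/2}. -/

import Mathlib

open scoped Classical

/-- A weighted graph with a distinguished embedded set of terminals indexed by `κ`:
a finite vertex type `V`, an embedding `ι : κ ↪ V` of the terminals, and a symmetric
nonnegative capacity function `c` on pairs of vertices. -/
structure WeightedGraph (κ : Type) where
  V : Type
  [fintypeV : Fintype V]
  ι : κ ↪ V
  c : V → V → ℝ
  symm : ∀ u v, c u v = c v u
  nonneg : ∀ u v, 0 ≤ c u v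

namespace WeightedGraph

variable {κ : Type}

instance (G : WeightedGraph κ) : Fintype G.V := G.fintypeV

/-- The cut function `h_G(A) = Σ_{u ∈ A, v ∉ A} c(u,v)`. -/
noncomputable def cutval (G : WeightedGraph κ) (A : Finset G.V) : ℝ :=
  ∑ u ∈ A, ∑ v ∈ Aᶜ, G.c u v

/-- The vertex sets realizing the terminal partition `(U, K \ U)`. -/
noncomputable def cutSets (G : WeightedGraph κ) (U : Finset κ) : Finset (Finset G.V) :=
  Finset.univ.filter fun A => ∀ x : κ, G.ι x ∈ A ↔ x ∈ U

theorem cutSets_nonempty (G : WeightedGraph κ) (U : Finset κ) : (G.cutSets U).Nonempty := by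
  refine ⟨U.image G.ι, ?_⟩
  simp [cutSets, Finset.mem_image, G.ι.injective.eq_iff]

/-- The terminal cut function `h_K^G(U) = min { h_G(A) : A ∩ K = U }`. -/
noncomputable def termCut (G : WeightedGraph κ) (U : Finset κ) : ℝ :=
  (G.cutSets U).inf' (G.cutSets_nonempty U) G.cutval

/-- `H` is a mimicking network for `(G, K)`: all minimum terminal cut values agree. -/
def IsMimicking (G H : WeightedGraph κ) : Prop :=
  ∀ U : Finset κ, H.termCut U = G.termCut U

/-- `H` is a quotient (contraction) of `G` along the surjection `f`: terminals map to
terminals, and capacities between distinct classes are sums of the original capacities. -/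
def IsQuotient (G H : WeightedGraph κ) (f : G.V → H.V) : Prop :=
  Function.Surjective f ∧ (∀ x : κ, f (G.ι x) = H.ι x) ∧
    ∀ y z : H.V, y ≠ z →
      H.c y z = ∑ u ∈ Finset.univ.filter (fun u => f u = y),
        ∑ v ∈ Finset.univ.filter (fun v => f v = z), G.c u v

end WeightedGraph

open WeightedGraph

theorem WeightedGraph.cutval_eq {κ : Type} (G : WeightedGraph κ) (A : Finset G.V) :
    G.cutval A = ∑ u, ∑ v, if u ∈ A ∧ v ∉ A then G.c u v else 0 := by
  unfold WeightedGraph.cutval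
  rw [← Finset.sum_subset (Finset.subset_univ A)]
  · refine Finset.sum_congr rfl fun u hu => ?_
    rw [← Finset.sum_filter]
    refine Finset.sum_congr ?_ fun _ _ => rfl
    ext v; simp [hu]
  · intro u _ hu
    simp [hu]

theorem WeightedGraph.mem_cutSets' {κ : Type} (G : WeightedGraph κ) (U : Finset κ)
    (A : Finset G.V) : A ∈ G.cutSets U ↔ ∀ x : κ, G.ι x ∈ A ↔ x ∈ U := by
  simp [WeightedGraph.cutSets]

/-- Disjoint union of stars with weights `W j`, glued along the terminals. -/
noncomputable def starGraph {κ J : Type} [Fintype κ] [Fintype J] (W : J → κ → ℝ)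
    (hW : ∀ j x, 0 ≤ W j x) : WeightedGraph κ where
  V := κ ⊕ J
  ι := ⟨Sum.inl, Sum.inl_injective⟩
  c := fun u v => match u, v with
    | Sum.inl x, Sum.inr j => W j x
    | Sum.inr j, Sum.inl x => W j x
    | _, _ => 0
  symm := by rintro (x | j) (y | i) <;> rfl
  nonneg := by rintro (x | j) (y | i) <;> simp [hW]

theorem starGraph_cutval {κ J : Type} [Fintype κ] [Fintype J] (W : J → κ → ℝ)
    (hW : ∀ j x, 0 ≤ W j x) (U : Finset κ) (A : Finset (κ ⊕ J))
    (hA : ∀ x, Sum.inl x ∈ A ↔ x ∈ U) :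
    (starGraph W hW).cutval A
      = ∑ j, if Sum.inr j ∈ A then ∑ x ∈ Uᶜ, W j x else ∑ x ∈ U, W j x := by
  have h1 := (starGraph W hW).cutval_eq A
  rw [h1]
  change ∑ u : κ ⊕ J, ∑ v : κ ⊕ J, _ = _
  simp only [Fintype.sum_sum_type]
  have : ∀ j, (if Sum.inr j ∈ A then ∑ x ∈ Uᶜ, W j x else ∑ x ∈ U, W j x)
      = (∑ x, if Sum.inl x ∈ A ∧ Sum.inr j ∉ A then W j x else 0)
        + ∑ x, if Sum.inr j ∈ A ∧ Sum.inl x ∉ A then W j x else 0 := by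
    intro j
    by_cases hj : Sum.inr j ∈ A
    · have hc : Uᶜ = Finset.univ.filter fun x => x ∉ U := by ext; simp
      rw [hc, Finset.sum_filter]
      simp [hj, hA]
    · simp [hj, hA]
  simp only [this, Finset.sum_add_distrib]
  simp [starGraph]
  rw [Finset.sum_comm]
  congr!

theorem starGraph_termCut {κ J : Type} [Fintype κ] [Fintype J] (W : J → κ → ℝ)
    (hW : ∀ j x, 0 ≤ W j x) (U : Finset κ) :
    (starGraph W hW).termCut U = ∑ j, min (∑ x ∈ U, W j x) (∑ x ∈ Uᶜ, W j x) := by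
  apply le_antisymm
  · let A : Finset (κ ⊕ J) := Finset.univ.filter fun z => match z with
      | Sum.inl x => x ∈ U
      | Sum.inr j => ∑ x ∈ Uᶜ, W j x ≤ ∑ x ∈ U, W j x
    have hA : ∀ x, Sum.inl x ∈ A ↔ x ∈ U := by intro x; simp [A]
    have hmem : A ∈ (starGraph W hW).cutSets U := by
      exact ((starGraph W hW).mem_cutSets' U A).mpr hA
    refine (Finset.inf'_le _ hmem).trans ?_
    rw [starGraph_cutval W hW U A hA]
    refine Finset.sum_le_sum fun j _ => ?_
    by_cases hj : ∑ x ∈ Uᶜ, W j x ≤ ∑ x ∈ U, W j x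
    · have : Sum.inr j ∈ A := by simpa [A] using hj
      rw [if_pos this, min_eq_right hj]
    · have : Sum.inr j ∉ A := by simpa [A] using hj
      rw [if_neg this, min_eq_left (not_le.mp hj).le]
  · refine Finset.le_inf' _ _ fun A hmem => ?_
    have hA : ∀ x, Sum.inl x ∈ A ↔ x ∈ U := by
      simp only [cutSets, Finset.mem_filter] at hmem
      exact hmem.2
    rw [starGraph_cutval W hW U A hA]
    refine Finset.sum_le_sum fun j _ => ?_
    split_ifs
    · exact min_le_right _ _
    · exact min_le_left _ _

/-- The cut vector of an unordered pair. -/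
noncomputable def pairVec {I α : Type} (S : I → Finset α) (i j : α) : I → ℝ :=
  fun U => if (i ∈ S U ∧ j ∉ S U) ∨ (j ∈ S U ∧ i ∉ S U) then 1 else 0

noncomputable def pairVec2 {I α : Type} (S : I → Finset α) : Sym2 α → I → ℝ :=
  Sym2.lift ⟨pairVec S, fun i j => by
    funext U; simp only [pairVec]; congr 1; exact propext or_comm⟩

/-- The subspace attached to a choice of minimizers. -/
noncomputable def cutSpace {I : Type} {t : ℕ} (S : I → Finset (Fin t)) : Submodule ℝ (I → ℝ) :=
  Submodule.span ℝ (Set.range fun q : {q : Sym2 (Fin t) // ¬ q.IsDiag} => pairVec2 S q.1)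

theorem cutSpace_finrank {I : Type} {t : ℕ} (S : I → Finset (Fin t)) :
    Module.finrank ℝ (cutSpace S) ≤ t * (t - 1) / 2 := by
  refine (finrank_range_le_card _).trans ?_
  rw [Sym2.card_subtype_not_diag, Fintype.card_fin, Nat.choose_two_right]

theorem pairVec_mem {I : Type} {t : ℕ} (S : I → Finset (Fin t)) (i j : Fin t) :
    pairVec S i j ∈ cutSpace S := by
  by_cases h : i = j
  · subst h
    have : pairVec S i i = 0 := by funext U; simp [pairVec]
    rw [this]; exact Submodule.zero_mem _
  · exact Submodule.subset_span ⟨⟨s(i, j), by simpa using h⟩, rfl⟩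

theorem termCut_mem {κ I : Type} (H : WeightedGraph κ) (t : ℕ) (ht : Fintype.card H.V ≤ t)
    (r : I → Finset κ) :
    ∃ S : I → Finset (Fin t), (fun U => H.termCut (r U)) ∈ cutSpace S := by
  have hA : ∀ U : I, ∃ A : Finset H.V, H.termCut (r U) = H.cutval A := fun U => by
    obtain ⟨A, -, h⟩ := Finset.exists_mem_eq_inf' (H.cutSets_nonempty (r U)) H.cutval
    exact ⟨A, h⟩
  choose A hA using hA
  obtain ⟨e⟩ : Nonempty (H.V ↪ Fin t) := by
    apply Function.Embedding.nonempty_of_card_le; simpa using ht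
  refine ⟨fun U => (A U).map e, ?_⟩
  have : (fun U => H.termCut (r U)) = ∑ u, ∑ v, (H.c u v / 2) •
      pairVec (fun U => (A U).map e) (e u) (e v) := by
    funext U
    rw [hA, H.cutval_eq]
    simp only [Finset.sum_apply, Pi.smul_apply, smul_eq_mul, pairVec, Finset.mem_map' e]
    have h2 : ∑ u, ∑ v, (if u ∈ A U ∧ v ∉ A U then H.c u v else 0)
        = ∑ u, ∑ v, (if v ∈ A U ∧ u ∉ A U then H.c u v else 0) := by
      rw [Finset.sum_comm]
      exact Finset.sum_congr rfl fun u _ => Finset.sum_congr rfl fun v _ => by rw [H.symm]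
    have h3 : ∀ x y : ℝ, x = y → x = (x + y) / 2 := by intros; linarith
    rw [h3 _ _ h2, ← Finset.sum_add_distrib, Finset.sum_div]
    refine Finset.sum_congr rfl fun u _ => ?_
    rw [← Finset.sum_add_distrib, Finset.sum_div]
    refine Finset.sum_congr rfl fun v _ => ?_
    by_cases hu : u ∈ A U <;> by_cases hv : v ∈ A U <;> simp [hu, hv]
  rw [this]
  exact Submodule.sum_mem _ fun u _ => Submodule.sum_mem _ fun v _ =>
    Submodule.smul_mem _ _ (pairVec_mem _ _ _)

/-- A generic nonnegative combination of a spanning family avoids finitely many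
proper subspaces. -/
theorem exists_generic {E J T : Type} [AddCommGroup E] [Module ℝ E] [Fintype J] [Fintype T]
    (f : J → E) (hf : ∀ φ : E →ₗ[ℝ] ℝ, (∀ j, φ (f j) = 0) → φ = 0)
    (P : T → Submodule ℝ E) (hP : ∀ i, P i ≠ ⊤) :
    ∃ a : J → ℝ, (∀ j, 0 ≤ a j) ∧ ∀ i, ∑ j, a j • f j ∉ P i := by
  have hφ : ∀ i, ∃ φ : E →ₗ[ℝ] ℝ, φ ≠ 0 ∧ P i ≤ LinearMap.ker φ := fun i =>
    Submodule.exists_le_ker_of_lt_top _ (lt_top_iff_ne_top.mpr (hP i))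
  choose φ hφ0 hφ using hφ
  let e := Fintype.equivFin J
  let p : T → Polynomial ℝ := fun i => ∑ j, Polynomial.monomial (e j : ℕ) (φ i (f j))
  have hp : ∀ i, p i ≠ 0 := by
    intro i hi
    apply hφ0 i
    apply hf
    intro j
    have := congrArg (fun q => Polynomial.coeff q (e j : ℕ)) hi
    simp only [p, Polynomial.finsetSum_coeff, Polynomial.coeff_monomial, Polynomial.coeff_zero,
      Fin.val_inj, e.injective.eq_iff] at this
    rw [Finset.sum_eq_single j (fun x _ hx => by
      rw [if_neg]; intro hh; exact hx hh) (by simp), if_pos rfl] at this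
    exact this
  have hq : (∏ i, p i) ≠ 0 := Finset.prod_ne_zero_iff.mpr fun i _ => hp i
  obtain ⟨s, hs0, hs⟩ : ∃ s : ℝ, 0 ≤ s ∧ ¬ (∏ i, p i).IsRoot s := by
    by_contra! hcon
    exact (Set.Ici_infinite (0 : ℝ)) ((Polynomial.finite_setOfPred_isRoot hq).subset
      fun s hs => hcon s hs)
  refine ⟨fun j => s ^ (e j : ℕ), fun j => pow_nonneg hs0 _, fun i hi => hs ?_⟩
  have h0 : (p i).eval s = 0 := by
    have := hφ i hi
    rw [LinearMap.mem_ker, map_sum] at this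
    rw [← this]
    simp only [p, Polynomial.eval_finsetSum, Polynomial.eval_monomial, map_smul, smul_eq_mul]
    exact Finset.sum_congr rfl fun j _ => mul_comm _ _
  rw [Polynomial.IsRoot, Polynomial.eval_prod]
  exact Finset.prod_eq_zero (Finset.mem_univ i) h0

abbrev NE (n : ℕ) := {U : Finset (Fin n) // U ≠ ∅}

/-- Weight on the non-last terminals. -/
noncomputable def wt {n : ℕ} (U₀ : Finset (Fin n)) (x : Fin n) : ℤ :=
  if x ∈ U₀ then (n + 1 : ℤ) else 1

theorem wt_sum {n : ℕ} (U₀ U : Finset (Fin n)) :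
    ∑ x ∈ U, wt U₀ x = (n + 1) * ((U ∩ U₀).card : ℤ) + ((U \ U₀).card : ℤ) := by
  unfold wt
  rw [Finset.sum_ite, Finset.filter_mem_eq_inter, Finset.filter_notMem_eq_sdiff]
  simp [mul_comm]

theorem wt_unique {n : ℕ} (U₀ U : Finset (Fin n)) (h : ∑ x ∈ U, wt U₀ x = ∑ x ∈ U₀, wt U₀ x) :
    U = U₀ := by
  rw [wt_sum, wt_sum] at h
  simp only [Finset.inter_self, Finset.sdiff_self, Finset.card_empty, Nat.cast_zero, add_zero] at h
  have h1 : (U \ U₀).card ≤ n := by simpa using Finset.card_le_univ (U \ U₀)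
  have h2 : (U ∩ U₀).card ≤ U₀.card := Finset.card_le_card Finset.inter_subset_right
  have h3 : (U ∩ U₀).card = U₀.card := by
    by_contra hne
    have : ((U ∩ U₀).card : ℤ) + 1 ≤ U₀.card := by exact_mod_cast lt_of_le_of_ne h2 hne
    have h1' : ((U \ U₀).card : ℤ) ≤ n := by exact_mod_cast h1
    nlinarith
  rw [h3] at h
  have h4 : (U \ U₀).card = 0 := by
    have : ((U \ U₀).card : ℤ) = 0 := by linarith
    exact_mod_cast this
  have h5 : U ∩ U₀ = U₀ := Finset.eq_of_subset_of_card_le Finset.inter_subset_right h3.ge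
  rw [Finset.card_eq_zero, Finset.sdiff_eq_empty_iff_subset] at h4
  exact Finset.Subset.antisymm h4 (Finset.inter_eq_right.mp h5)

theorem wt_large {n : ℕ} (U₀ : Finset (Fin n)) (h : U₀ ≠ ∅) :
    ∑ x, wt U₀ x + 1 ≤ 2 * ∑ x ∈ U₀, wt U₀ x := by
  rw [wt_sum, wt_sum]
  have h1 : (Finset.univ \ U₀).card ≤ n := by simpa using Finset.card_le_univ (Finset.univ \ U₀)
  have h1' : ((Finset.univ \ U₀).card : ℤ) ≤ n := by exact_mod_cast h1
  have h2 : (1 : ℤ) ≤ U₀.card := by exact_mod_cast Finset.card_pos.mpr (Finset.nonempty_of_ne_empty h)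
  simp only [Finset.inter_self, Finset.sdiff_self, Finset.card_empty, Nat.cast_zero, add_zero,
    Finset.univ_inter]
  nlinarith

/-- Integer star weights on all terminals. -/
noncomputable def starWt {n : ℕ} (j : NE n × Fin 3) : Fin (n + 1) → ℤ :=
  Fin.lastCases (2 * ∑ x ∈ j.1.1, wt j.1.1 x - ∑ x, wt j.1.1 x + ((j.2 : ℕ) - 1 : ℤ))
    (wt j.1.1)

theorem starWt_nonneg {n : ℕ} (j : NE n × Fin 3) (x : Fin (n + 1)) : 0 ≤ starWt j x := by
  refine Fin.lastCases ?_ (fun x => ?_) x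
  · have := wt_large j.1.1 j.1.2
    simp only [starWt, Fin.lastCases_last]
    omega
  · simp only [starWt, Fin.lastCases_castSucc, wt]
    split_ifs <;> omega

theorem starWt_sum {n : ℕ} (j : NE n × Fin 3) (U : Finset (Fin n)) :
    ∑ x ∈ U.map Fin.castSuccEmb, starWt j x = ∑ x ∈ U, wt j.1.1 x := by
  simp [Finset.sum_map, starWt]

theorem starWt_sum_compl {n : ℕ} (j : NE n × Fin 3) (U : Finset (Fin n)) :
    ∑ x ∈ (U.map Fin.castSuccEmb)ᶜ, starWt j x
      = 2 * ∑ x ∈ j.1.1, wt j.1.1 x + ((j.2 : ℕ) - 1 : ℤ) - ∑ x ∈ U, wt j.1.1 x := by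
  have h := Finset.sum_add_sum_compl (U.map Fin.castSuccEmb) (starWt j)
  rw [starWt_sum, Fin.sum_univ_castSucc] at h
  simp only [starWt, Fin.lastCases_castSucc, Fin.lastCases_last] at h ⊢
  linarith

/-- The terminal cut vector of one star. -/
noncomputable def starVec {n : ℕ} (j : NE n × Fin 3) : NE n → ℝ := fun U =>
  min (∑ x ∈ U.1.map Fin.castSuccEmb, (starWt j x : ℝ))
    (∑ x ∈ (U.1.map Fin.castSuccEmb)ᶜ, (starWt j x : ℝ))

theorem starVec_eq {n : ℕ} (j : NE n × Fin 3) (U : NE n) :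
    starVec j U = ((min (∑ x ∈ U.1, wt j.1.1 x) (2 * ∑ x ∈ j.1.1, wt j.1.1 x + ((j.2 : ℕ) - 1 : ℤ)
      - ∑ x ∈ U.1, wt j.1.1 x) : ℤ) : ℝ) := by
  rw [← starWt_sum_compl, ← starWt_sum]
  simp [starVec]

theorem starVec_comb {n : ℕ} (U₀ : NE n) :
    (2 : ℝ) • starVec (U₀, 1) - starVec (U₀, 0) - starVec (U₀, 2) = Pi.single U₀ 1 := by
  funext U
  simp only [Pi.sub_apply, Pi.smul_apply, smul_eq_mul, starVec_eq]
  by_cases h : U = U₀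
  · subst h
    rw [Pi.single_eq_same]
    simp only [Fin.coe_ofNat_eq_mod]
    norm_num only
    norm_cast
    omega
  · rw [Pi.single_eq_of_ne h]
    have hne : ∑ x ∈ U.1, wt U₀.1 x ≠ ∑ x ∈ U₀.1, wt U₀.1 x :=
      fun hh => h (Subtype.ext (wt_unique _ _ hh))
    simp only [Fin.coe_ofNat_eq_mod]
    norm_num only
    norm_cast
    omega

theorem starVec_span {n : ℕ} (φ : (NE n → ℝ) →ₗ[ℝ] ℝ)
    (h : ∀ j, φ (starVec j) = 0) : φ = 0 := by
  apply LinearMap.pi_ext'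
  intro U₀
  ext
  have := congrArg φ (starVec_comb U₀)
  simp only [map_sub, map_smul, h, smul_zero, sub_zero] at this
  simpa using this.symm

theorem mimicking_aux (n t : ℕ)
    (h : ∀ G : WeightedGraph (Fin (n + 1)), ∃ H : WeightedGraph (Fin (n + 1)),
      WeightedGraph.IsMimicking G H ∧ Fintype.card H.V ≤ t) :
    2 ^ n - 1 ≤ t * (t - 1) / 2 := by
  by_contra! hlt
  have hP : ∀ S : NE n → Finset (Fin t), cutSpace S ≠ ⊤ := by
    intro S hS
    have h1 := cutSpace_finrank S
    rw [hS, finrank_top, Module.finrank_fintype_fun_eq_card] at h1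
    have h2 : Fintype.card (NE n) = 2 ^ n - 1 := by
      rw [Fintype.card_subtype_compl]; simp
    omega
  obtain ⟨a, ha, hgen⟩ := exists_generic (starVec (n := n)) starVec_span _ hP
  have hW : ∀ (j : NE n × Fin 3) (x : Fin (n + 1)), 0 ≤ a j * (starWt j x : ℝ) := fun j x =>
    mul_nonneg (ha j) (by exact_mod_cast starWt_nonneg j x)
  obtain ⟨H, hH, hc⟩ := h (starGraph (fun j x => a j * (starWt j x : ℝ)) hW)
  obtain ⟨S, hS⟩ := termCut_mem H t hc (fun U : NE n => U.1.map Fin.castSuccEmb)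
  apply hgen S
  convert hS using 1
  funext U
  rw [hH, starGraph_termCut]
  simp only [Finset.sum_apply, Pi.smul_apply, smul_eq_mul, starVec, ← Finset.mul_sum]
  refine Finset.sum_congr rfl fun j _ => ?_
  rw [mul_min_of_nonneg _ _ (ha j)]
  congr!

/-- if every weighted graph with `k` terminals (`k ≥ 2`) admits a
mimicking network with at most `t` vertices, then `t(t-1)/2 ≥ 2^(k-1) - 1`; in
particular `t ≥ 2^((k-1)/2)`. -/
theorem mimicking_size_lower_bound (k t : ℕ) (hk : 2 ≤ k)
    (h : ∀ G : WeightedGraph (Fin k), ∃ H : WeightedGraph (Fin k),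
      WeightedGraph.IsMimicking G H ∧ Fintype.card H.V ≤ t) :
    2 ^ (k - 1) - 1 ≤ t * (t - 1) / 2 ∧
      (2 : ℝ) ^ (((k : ℝ) - 1) / 2) ≤ (t : ℝ) := by
  have h1 : 2 ^ (k - 1) - 1 ≤ t * (t - 1) / 2 := by
    obtain ⟨n, rfl⟩ : ∃ n, k = n + 1 := ⟨k - 1, by omega⟩
    exact mimicking_aux n t h
  refine ⟨h1, ?_⟩
  have h2 : 2 ^ (k - 1) ≤ t ^ 2 := by
    have h3 : 2 ^ 1 ≤ 2 ^ (k - 1) := Nat.pow_le_pow_right (by norm_num) (by omega)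
    rcases t with _ | t
    · simp at h1 h3; omega
    · have h4 : (t + 1) * (t + 1 - 1) / 2 ≤ (t + 1) * t := Nat.div_le_self _ _
      have h5 : (t + 1) ^ 2 = (t + 1) * t + (t + 1) := by ring
      omega
  have h3 : ((2 : ℝ) ^ (((k : ℝ) - 1) / 2)) ^ 2 ≤ (t : ℝ) ^ 2 := by
    rw [← Real.rpow_natCast, ← Real.rpow_mul (by norm_num)]
    have : ((k : ℝ) - 1) / 2 * ((2 : ℕ) : ℝ) = ((k - 1 : ℕ) : ℝ) := by
      rw [Nat.cast_sub (by omega)]; push_cast; ring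
    rw [this, Real.rpow_natCast]
    exact_mod_cast h2
  exact (sq_le_sq₀ (by positivity) (Nat.cast_nonneg t)).mp h3
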